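/- For every integer n > 1, every DWA over {a, b, i} that realizes O_n has at least n + 2 states; in particular, the states δ̂(q₀, i^j) for j = 0, 1, …, n + 1 are pairwise distinct. -/

import Mathlib

/-- A deterministic weighted automaton (DWA) over alphabet `A` with state space `Q`. -/
structure DWA (A : Type) (Q : Type) where
  init : Q
  δ : Q → A → Q
  c : Q → A → ℤ

/-- The extended transition function `δ̂`. -/
def DWA.run {A Q : Type} (M : DWA A Q) (q : Q) (w : List A) : Q :=
  w.foldl M.δ q

/-- The accumulated weight of the run on `w` starting in state `q`. -/
def DWA.valFrom {A Q : Type} (M : DWA A Q) : Q → List A → ℤ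
  | _, [] => 0
  | q, x :: w => M.c q x + M.valFrom (M.δ q x) w

/-- The value `A(w)` of a word: the sum of the weights along the run from the initial state. -/
def DWA.val {A Q : Type} (M : DWA A Q) (w : List A) : ℤ :=
  M.valFrom M.init w

/-- The three-letter alphabet `{a, b, i}`. -/
inductive ABI where
  | a : ABI
  | b : ABI
  | i : ABI
deriving DecidableEq

open Classical in
/-- The observation function `O_n` on nonempty words over `{a, b, i}`:
`O_n(w) = 1` if `w` consists only of `i`'s, or `i^{n+1}` is a prefix of `w`, or
`i^k·a·b^{n-k}` or `i^k·b·a^{n-k}` is a prefix of `w` for some `k < n`; otherwise `O_n(w) = 2`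
if the first letter of `w` different from `i` is `a`, and `O_n(w) = 0` if it is `b`. -/
noncomputable def Obs (n : ℕ) (w : List ABI) : ℕ :=
  if (∀ x ∈ w, x = ABI.i) ∨
      (List.replicate (n + 1) ABI.i <+: w) ∨
      (∃ k < n, List.replicate k ABI.i ++ [ABI.a] ++ List.replicate (n - k) ABI.b <+: w) ∨
      (∃ k < n, List.replicate k ABI.i ++ [ABI.b] ++ List.replicate (n - k) ABI.a <+: w)
  then 1
  else if ∃ k, List.replicate k ABI.i ++ [ABI.a] <+: w then 2
  else 0

/-- A DWA `M` over `{a, b, i}` realizes `O_n` if, for every nonempty word `w`,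
`M(w) < 0 ↔ O_n(w) = 0`, `M(w) = 0 ↔ O_n(w) = 1`, and `M(w) > 0 ↔ O_n(w) = 2`. -/
def Realizes {Q : Type} (n : ℕ) (M : DWA ABI Q) : Prop :=
  ∀ w : List ABI, w ≠ [] →
    (M.val w < 0 ↔ Obs n w = 0) ∧ (M.val w = 0 ↔ Obs n w = 1) ∧ (0 < M.val w ↔ Obs n w = 2)

theorem prefix_aa (r k : ℕ) (u v : List ABI) :
    (List.replicate r ABI.i ++ ABI.a :: u <+: List.replicate k ABI.i ++ ABI.a :: v) ↔
      r = k ∧ u <+: v := by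
  induction r generalizing k with
  | zero => cases k <;> simp [List.replicate_succ, List.cons_prefix_cons]
  | succ r ih => cases k <;> simp [List.replicate_succ, List.cons_prefix_cons, ih]

theorem prefix_ba (r k : ℕ) (u v : List ABI) :
    ¬ (List.replicate r ABI.i ++ ABI.b :: u <+: List.replicate k ABI.i ++ ABI.a :: v) := by
  induction r generalizing k with
  | zero => cases k <;> simp [List.replicate_succ, List.cons_prefix_cons]
  | succ r ih => cases k <;> simp [List.replicate_succ, List.cons_prefix_cons, ih]

theorem prefix_ia (r k : ℕ) (v : List ABI) :
    (List.replicate r ABI.i <+: List.replicate k ABI.i ++ ABI.a :: v) ↔ r ≤ k := by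
  induction r generalizing k with
  | zero => simp
  | succ r ih => cases k <;> simp [List.replicate_succ, List.cons_prefix_cons, ih]

theorem prefix_bb (r k : ℕ) :
    (List.replicate r ABI.b <+: List.replicate k ABI.b) ↔ r ≤ k := by
  constructor
  · intro h
    simpa using h.length_le
  · intro h
    exact List.prefix_replicate_iff.2 (by simp [h])

theorem obs_iff (n k m : ℕ) :
    Obs n (List.replicate k ABI.i ++ ABI.a :: List.replicate m ABI.b) = 1 ↔
      (n + 1 ≤ k ∨ (k < n ∧ n - k ≤ m)) := by
  have key : ((∀ x ∈ (List.replicate k ABI.i ++ ABI.a :: List.replicate m ABI.b), x = ABI.i) ∨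
      (List.replicate (n + 1) ABI.i <+:
        (List.replicate k ABI.i ++ ABI.a :: List.replicate m ABI.b)) ∨
      (∃ r < n, List.replicate r ABI.i ++ [ABI.a] ++ List.replicate (n - r) ABI.b <+:
        (List.replicate k ABI.i ++ ABI.a :: List.replicate m ABI.b)) ∨
      (∃ r < n, List.replicate r ABI.i ++ [ABI.b] ++ List.replicate (n - r) ABI.a <+:
        (List.replicate k ABI.i ++ ABI.a :: List.replicate m ABI.b))) ↔
      (n + 1 ≤ k ∨ (k < n ∧ n - k ≤ m)) := by
    simp only [List.append_assoc, List.singleton_append, prefix_aa, prefix_ba, prefix_ia,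
      prefix_bb]
    constructor
    · rintro (h | h | ⟨r, hr, rfl, h⟩ | ⟨r, hr, h⟩)
      · exact absurd (h ABI.a (by simp)) (by simp)
      · exact Or.inl h
      · exact Or.inr ⟨hr, h⟩
      · exact h.elim
    · rintro (h | ⟨h, h'⟩)
      · exact Or.inr (Or.inl h)
      · exact Or.inr (Or.inr (Or.inl ⟨k, h, rfl, h'⟩))
  unfold Obs
  rw [if_congr key rfl rfl]
  split_ifs <;> simp_all

theorem valFrom_append {A Q : Type} (M : DWA A Q) (q : Q) (u v : List A) :
    M.valFrom q (u ++ v) = M.valFrom q u + M.valFrom (M.run q u) v := by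
  induction u generalizing q with
  | nil => simp [DWA.valFrom, DWA.run]
  | cons x u ih => simp [DWA.valFrom, DWA.run, ih, add_assoc]

theorem val_rep {Q : Type} {n : ℕ} {M : DWA ABI Q} (hM : Realizes n M) (j : ℕ) :
    M.valFrom M.init (List.replicate j ABI.i) = 0 := by
  rcases Nat.eq_zero_or_pos j with rfl | hj
  · simp [DWA.valFrom]
  · refine (hM (List.replicate j ABI.i) (by simp; omega)).2.1.2 ?_
    unfold Obs
    rw [if_pos]
    left
    intro x hx
    exact List.eq_of_mem_replicate hx

theorem cond_of_eq {Q : Type} {n : ℕ} {M : DWA ABI Q} (hM : Realizes n M) {j k : ℕ}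
    (h : M.run M.init (List.replicate j ABI.i) = M.run M.init (List.replicate k ABI.i)) (m : ℕ) :
    (n + 1 ≤ j ∨ (j < n ∧ n - j ≤ m)) ↔ (n + 1 ≤ k ∨ (k < n ∧ n - k ≤ m)) := by
  rw [← obs_iff, ← obs_iff, ← (hM _ (by simp)).2.1, ← (hM _ (by simp)).2.1]
  simp only [DWA.val, valFrom_append, val_rep hM, h]

theorem run_ne {Q : Type} {n : ℕ} {M : DWA ABI Q} (hM : Realizes n M) {j k : ℕ}
    (hk : k ≤ n + 1) (hjk : j < k) :
    M.run M.init (List.replicate j ABI.i) ≠ M.run M.init (List.replicate k ABI.i) := by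
  intro h
  have h0 := cond_of_eq hM h 0
  have h1 := cond_of_eq hM h (n - k)
  have h2 := cond_of_eq hM h (n - j)
  omega

/-- every DWA over `{a, b, i}` realizing `O_n` has at least `n + 2` states;
in particular the states `δ̂(q₀, i^j)` for `j = 0, …, n + 1` are pairwise distinct. -/
theorem min_states_realizing (n : ℕ) (hn : 1 < n) (Q : Type) [Fintype Q]
    (M : DWA ABI Q) (hM : Realizes n M) :
    n + 2 ≤ Fintype.card Q ∧
    ∀ j k, j ≤ n + 1 → k ≤ n + 1 → j ≠ k →
      M.run M.init (List.replicate j ABI.i) ≠ M.run M.init (List.replicate k ABI.i) := by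
  have hne : ∀ j k, j ≤ n + 1 → k ≤ n + 1 → j ≠ k →
      M.run M.init (List.replicate j ABI.i) ≠ M.run M.init (List.replicate k ABI.i) := by
    intro j k hj hk hjk
    rcases lt_or_gt_of_ne hjk with h | h
    · exact run_ne hM hk h
    · exact (run_ne hM hj h).symm
  refine ⟨?_, hne⟩
  have hinj : Function.Injective
      (fun j : Fin (n + 2) => M.run M.init (List.replicate j.1 ABI.i)) := by
    intro j k h
    by_contra hjk
    exact hne j.1 k.1 (by omega) (by omega) (fun e => hjk (Fin.ext e)) h
  simpa using Fintype.card_le_of_injective _ hinj
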